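/- arXiv:math/0511337 — 2 statements merged into one kernel-verified Lean document; each statement's English description precedes it below -/
import Mathlib

section
/- Let a, b, c be nonzero complex numbers and set J₁₂ = (a−b)/c, J₂₃ = (b−c)/a, J₃₁ = (c−a)/b. Let A be the quotient of the free associative ℂ-algebra on generators Y₀, Y₁, Y₂, Y₃ by the two-sided ideal generated by the six elements, for each cyclic permutation (k,ℓ,m) of (1,2,3): Y₀Y_k − Y_kY₀ − (Y_ℓY_m + Y_mY_ℓ) and Y_ℓY_m − Y_mY_ℓ + J_{ℓm}·(Y₀Y_k + Y_kY₀). Then for each cyclic permutation (k,ℓ,m) of (1,2,3) the image in A of the quadratic element Q_m = J_{kℓ}·(Y₀² + Y_m²) + Y_k² − Y_ℓ² is central, i.e. commutes with every element of A. -/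
/-- The four generators `Y₀, Y₁, Y₂, Y₃` of the free algebra. -/
noncomputable def y14 : Fin 4 → FreeAlgebra ℂ (Fin 4) := fun i => FreeAlgebra.ι ℂ i

/-- The relations of `A_u`: for each cyclic permutation `(k,ℓ,m)` of `(1,2,3)`,
`[Y₀, Y_k]₋ = [Y_ℓ, Y_m]₊` and `[Y_ℓ, Y_m]₋ = −J_{ℓm} [Y₀, Y_k]₊`, where
`J₂₃ = (b−c)/a`, `J₃₁ = (c−a)/b`, `J₁₂ = (a−b)/c`. -/
def rel14 (a b c : ℂ) : FreeAlgebra ℂ (Fin 4) → FreeAlgebra ℂ (Fin 4) → Prop := fun p q =>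
  q = 0 ∧
  (p = y14 0 * y14 1 - y14 1 * y14 0 - (y14 2 * y14 3 + y14 3 * y14 2) ∨
   p = y14 0 * y14 2 - y14 2 * y14 0 - (y14 3 * y14 1 + y14 1 * y14 3) ∨
   p = y14 0 * y14 3 - y14 3 * y14 0 - (y14 1 * y14 2 + y14 2 * y14 1) ∨
   p = y14 2 * y14 3 - y14 3 * y14 2 + ((b - c) / a) • (y14 0 * y14 1 + y14 1 * y14 0) ∨
   p = y14 3 * y14 1 - y14 1 * y14 3 + ((c - a) / b) • (y14 0 * y14 2 + y14 2 * y14 0) ∨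
   p = y14 1 * y14 2 - y14 2 * y14 1 + ((a - b) / c) • (y14 0 * y14 3 + y14 3 * y14 0))

/-!
Write `[·,·]` for commutators and `{·,·}` for anticommutators. For a fixed cyclic index, the
relations involving `Q = j (w² + x²) + y² - z²` are `[w,y] = {z,x}`, `[w,z] = {x,y}` and
`[y,z] = -j {w,x}`. In any associative ring `[u²,v] = {u,[u,v]} = [u,{u,v}]` and
`[u,[v,t]] = {{u,v},t} - {{t,u},v}`. Evaluating `[x,[y,z]]`, `[w,[y,z]]` and `[x,[w,z]]` both by
these identities (or the Jacobi identity) and by the relations shows that `Q` commutes with `w`,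
`x` and `y`. Exchanging `y` and `z` turns `(j, Q)` into `(-j, -Q)`, so `Q` commutes with `z` too.
-/

/-- The anticommutator `[u, v]₊ = u v + v u`, without the factor `1 / 2` of the Jordan product. -/
def anticommutator {A : Type*} [NonUnitalNonAssocSemiring A] (u v : A) : A := u * v + v * u

theorem anticommutator_comm {A : Type*} [NonUnitalNonAssocSemiring A] (u v : A) :
    anticommutator u v = anticommutator v u :=
  add_comm _ _

theorem anticommutator_neg {A : Type*} [NonUnitalNonAssocRing A] (u v : A) :
    anticommutator u (-v) = -anticommutator u v := by
  simp only [anticommutator, mul_neg, neg_mul, neg_add]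

section Semialgebra

variable {R A : Type*} [CommSemiring R] [Semiring A] [Algebra R A]

theorem anticommutator_smul (r : R) (u v : A) :
    anticommutator u (r • v) = r • anticommutator u v := by
  simp only [anticommutator, mul_smul_comm, smul_mul_assoc, smul_add]

theorem mem_center_of_adjoin_range_eq_top {ι : Type*} {Y : ι → A}
    (hY : Algebra.adjoin R (Set.range Y) = ⊤) {q : A} (hq : ∀ i, Commute q (Y i)) :
    q ∈ Subalgebra.center R A := by
  refine Subalgebra.mem_center_iff.2 fun b => Eq.symm ?_
  have hb : b ∈ Algebra.adjoin R (Set.range Y) := hY ▸ Algebra.mem_top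
  exact Algebra.commute_of_mem_adjoin_of_forall_mem_commute hb (Set.forall_mem_range.2 hq)

end Semialgebra

theorem adjoin_range_mkAlgHom_comp_ι {R X : Type*} [CommSemiring R]
    (r : FreeAlgebra R X → FreeAlgebra R X → Prop) :
    Algebra.adjoin R (Set.range (RingQuot.mkAlgHom R r ∘ FreeAlgebra.ι R)) = ⊤ := by
  rw [Set.range_comp, ← AlgHom.map_adjoin, FreeAlgebra.adjoin_range_ι, Algebra.map_top,
    AlgHom.range_eq_top]
  exact RingQuot.mkAlgHom_surjective R r

section Ring

variable {A : Type*} [Ring A]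

theorem sq_lie_eq_anticommutator_lie (u v : A) : ⁅u ^ 2, v⁆ = anticommutator u ⁅u, v⁆ := by
  simp only [anticommutator, Ring.lie_def]
  noncomm_ring

theorem sq_lie_eq_lie_anticommutator (u v : A) : ⁅u ^ 2, v⁆ = ⁅u, anticommutator u v⁆ := by
  simp only [anticommutator, Ring.lie_def]
  noncomm_ring

theorem lie_lie_eq_anticommutator_sub (u v t : A) :
    ⁅u, ⁅v, t⁆⁆ =
      anticommutator (anticommutator u v) t - anticommutator (anticommutator t u) v := by
  simp only [anticommutator, Ring.lie_def]
  noncomm_ring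

end Ring

section Algebra

variable {R A : Type*} [CommRing R] [Ring A] [Algebra R A]

section Quadruple

attribute [local instance 100] LieRing.ofAssociativeRing

variable {j : R} {w x y z : A}

theorem commute_quadratic_w (hwy : ⁅w, y⁆ = anticommutator z x)
    (hwz : ⁅w, z⁆ = anticommutator x y) (hyz : ⁅y, z⁆ = -(j • anticommutator w x)) :
    Commute (j • (w ^ 2 + x ^ 2) + y ^ 2 - z ^ 2) w := by
  have hx : j • ⁅x ^ 2, w⁆ = -⁅x, ⁅y, z⁆⁆ := by
    rw [sq_lie_eq_lie_anticommutator, hyz, ← smul_neg, lie_smul, lie_neg, smul_neg, neg_neg,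
      anticommutator_comm x w]
  have hy : ⁅y ^ 2, w⁆ = -anticommutator (anticommutator z x) y := by
    rw [sq_lie_eq_anticommutator_lie, ← lie_skew, hwy, anticommutator_neg, anticommutator_comm y]
  have hz : ⁅z ^ 2, w⁆ = -anticommutator (anticommutator x y) z := by
    rw [sq_lie_eq_anticommutator_lie, ← lie_skew, hwz, anticommutator_neg, anticommutator_comm z]
  rw [commute_iff_lie_eq, sub_lie, add_lie, smul_lie, add_lie, smul_add,
    (Commute.pow_self w 2).lie_eq, hx, hy, hz, lie_lie_eq_anticommutator_sub]
  module

theorem commute_quadratic_x (hwy : ⁅w, y⁆ = anticommutator z x)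
    (hwz : ⁅w, z⁆ = anticommutator x y) (hyz : ⁅y, z⁆ = -(j • anticommutator w x)) :
    Commute (j • (w ^ 2 + x ^ 2) + y ^ 2 - z ^ 2) x := by
  have hw : j • ⁅w ^ 2, x⁆ = -⁅w, ⁅y, z⁆⁆ := by
    rw [sq_lie_eq_lie_anticommutator, hyz, ← smul_neg, lie_smul, lie_neg, smul_neg, neg_neg]
  have jacobi : ⁅w, ⁅y, z⁆⁆ = ⁅y ^ 2, x⁆ - ⁅z ^ 2, x⁆ := by
    rw [leibniz_lie, hwy, hwz, ← lie_skew, ← sq_lie_eq_lie_anticommutator,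
      anticommutator_comm x y, ← sq_lie_eq_lie_anticommutator]
    abel
  rw [commute_iff_lie_eq, sub_lie, add_lie, smul_lie, add_lie, smul_add, hw, jacobi,
    (Commute.pow_self x 2).lie_eq, smul_zero]
  abel

theorem commute_quadratic_y (hwy : ⁅w, y⁆ = anticommutator z x)
    (hwz : ⁅w, z⁆ = anticommutator x y) (hyz : ⁅y, z⁆ = -(j • anticommutator w x)) :
    Commute (j • (w ^ 2 + x ^ 2) + y ^ 2 - z ^ 2) y := by
  have hw : ⁅w ^ 2, y⁆ = anticommutator (anticommutator z x) w := by
    rw [sq_lie_eq_anticommutator_lie, hwy, anticommutator_comm]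
  have hx : ⁅x ^ 2, y⁆ =
      anticommutator (anticommutator w x) z - anticommutator (anticommutator z x) w := by
    rw [sq_lie_eq_lie_anticommutator, ← hwz, lie_lie_eq_anticommutator_sub,
      anticommutator_comm x w]
  have hz : ⁅z ^ 2, y⁆ = j • anticommutator (anticommutator w x) z := by
    rw [sq_lie_eq_anticommutator_lie, ← lie_skew, hyz, neg_neg, anticommutator_smul,
      anticommutator_comm z]
  rw [commute_iff_lie_eq, sub_lie, add_lie, smul_lie, add_lie, hw, hx, hz,
    (Commute.pow_self y 2).lie_eq]
  module

theorem commute_quadratic_z (hwy : ⁅w, y⁆ = anticommutator z x)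
    (hwz : ⁅w, z⁆ = anticommutator x y) (hyz : ⁅y, z⁆ = -(j • anticommutator w x)) :
    Commute (j • (w ^ 2 + x ^ 2) + y ^ 2 - z ^ 2) z := by
  have hzy : ⁅z, y⁆ = -(-j • anticommutator w x) := by rw [← lie_skew, hyz, neg_smul]
  have swapped : Commute (-j • (w ^ 2 + x ^ 2) + z ^ 2 - y ^ 2) z :=
    commute_quadratic_y (hwz.trans (anticommutator_comm x y))
      (hwy.trans (anticommutator_comm z x)) hzy
  convert swapped.neg_left using 1
  module

end Quadruple

/-- The Sklyanin relations, with arbitrary structure constants `J`, for a family `Y`. The indices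
`1, 2, 3` of the generators are encoded as `k.succ` with `k : Fin 3`, so that cyclic shifts are
additions in `Fin 3`; `J k` is the constant `J_{ℓm}` for which `(k.succ, ℓ, m)` is cyclic. -/
structure SklyaninRelations (J : Fin 3 → R) (Y : Fin 4 → A) : Prop where
  lie_zero : ∀ k : Fin 3, ⁅Y 0, Y k.succ⁆ = anticommutator (Y (k + 1).succ) (Y (k + 2).succ)
  lie_succ : ∀ k : Fin 3,
    ⁅Y (k + 1).succ, Y (k + 2).succ⁆ = -(J k • anticommutator (Y 0) (Y k.succ))

/-- The quadratic Casimir element attached to the structure constant `J k`; it is the `Q_m` of the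
paper with `m = k.succ`. -/
def sklyaninCasimir (J : Fin 3 → R) (Y : Fin 4 → A) (k : Fin 3) : A :=
  J k • (Y 0 ^ 2 + Y k.succ ^ 2) + Y (k + 1).succ ^ 2 - Y (k + 2).succ ^ 2

theorem map_sklyaninCasimir {B : Type*} [Ring B] [Algebra R B] (f : A →ₐ[R] B) (J : Fin 3 → R)
    (Y : Fin 4 → A) (k : Fin 3) :
    f (sklyaninCasimir J Y k) = sklyaninCasimir J (f ∘ Y) k := by
  simp only [sklyaninCasimir, map_sub, map_add, map_smul, map_pow, Function.comp_apply]

theorem SklyaninRelations.commute_casimir {J : Fin 3 → R} {Y : Fin 4 → A}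
    (h : SklyaninRelations J Y) (k : Fin 3) (i : Fin 4) :
    Commute (sklyaninCasimir J Y k) (Y i) := by
  have add_one_add_two : k + 1 + 2 = k := by omega
  have add_two_add_one : k + 2 + 1 = k := by omega
  have add_one_add_one : k + 1 + 1 = k + 2 := by omega
  have add_two_add_two : k + 2 + 2 = k + 1 := by omega
  have hwy := h.lie_zero (k + 1)
  have hwz := h.lie_zero (k + 2)
  rw [add_one_add_one, add_one_add_two] at hwy
  rw [add_two_add_one, add_two_add_two] at hwz
  have hyz := h.lie_succ k
  have cyclic_cases : ∀ k l : Fin 3, l = k ∨ l = k + 1 ∨ l = k + 2 := by decide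
  cases i using Fin.cases with
  | zero => exact commute_quadratic_w hwy hwz hyz
  | succ l =>
    obtain rfl | rfl | rfl := cyclic_cases k l
    · exact commute_quadratic_x hwy hwz hyz
    · exact commute_quadratic_y hwy hwz hyz
    · exact commute_quadratic_z hwy hwz hyz

theorem stmt_14_general {J : Fin 3 → R} {Y : Fin 4 → A} (h : SklyaninRelations J Y)
    (hY : Algebra.adjoin R (Set.range Y) = ⊤) (k : Fin 3) :
    sklyaninCasimir J Y k ∈ Subalgebra.center R A :=
  mem_center_of_adjoin_range_eq_top hY (h.commute_casimir k)

end Algebra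

theorem sklyaninRelations_mkAlgHom (a b c : ℂ) :
    SklyaninRelations ![(b - c) / a, (c - a) / b, (a - b) / c]
      (RingQuot.mkAlgHom ℂ (rel14 a b c) ∘ y14) := by
  have map_eq_zero {p} (hp : rel14 a b c p 0) : RingQuot.mkAlgHom ℂ (rel14 a b c) p = 0 := by
    rw [RingQuot.mkAlgHom_rel ℂ hp, map_zero]
  constructor <;> intro k
  · rw [← sub_eq_zero]
    simp only [anticommutator, Ring.lie_def, Function.comp_apply, ← map_mul, ← map_add, ← map_sub]
    apply map_eq_zero
    fin_cases k <;> simp [rel14]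
  · rw [← sub_eq_zero, sub_neg_eq_add]
    simp only [anticommutator, Ring.lie_def, Function.comp_apply, ← map_mul, ← map_add, ← map_sub,
      ← map_smul]
    apply map_eq_zero
    fin_cases k <;> simp [rel14]

/-- The images of the quadratic elements `Q_m = J_{kℓ}(Y₀² + Y_m²) + Y_k² − Y_ℓ²`
are central in the quotient. -/
theorem stmt_14 (a b c : ℂ) (ha : a ≠ 0) (hb : b ≠ 0) (hc : c ≠ 0) :
    (∀ z : RingQuot (rel14 a b c),
      Commute (RingQuot.mkAlgHom ℂ (rel14 a b c)
        (((b - c) / a) • (y14 0 ^ 2 + y14 1 ^ 2) + y14 2 ^ 2 - y14 3 ^ 2)) z) ∧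
    (∀ z : RingQuot (rel14 a b c),
      Commute (RingQuot.mkAlgHom ℂ (rel14 a b c)
        (((c - a) / b) • (y14 0 ^ 2 + y14 2 ^ 2) + y14 3 ^ 2 - y14 1 ^ 2)) z) ∧
    (∀ z : RingQuot (rel14 a b c),
      Commute (RingQuot.mkAlgHom ℂ (rel14 a b c)
        (((a - b) / c) • (y14 0 ^ 2 + y14 3 ^ 2) + y14 1 ^ 2 - y14 2 ^ 2)) z) := by
  have casimir_commute (k : Fin 3) (z : RingQuot (rel14 a b c)) :
      Commute (RingQuot.mkAlgHom ℂ (rel14 a b c)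
        (sklyaninCasimir ![(b - c) / a, (c - a) / b, (a - b) / c] y14 k)) z := by
    rw [map_sklyaninCasimir]
    exact (Subalgebra.mem_center_iff.1 (stmt_14_general (sklyaninRelations_mkAlgHom a b c)
      (adjoin_range_mkAlgHom_comp_ι _) k) z).symm
  exact ⟨casimir_commute 0, casimir_commute 1, casimir_commute 2⟩
end

section
/- Let τ ∈ ℂ with Im τ > 0 and define the Jacobi theta functions θ₁, θ₂, θ₃, θ₄ (with parameter τ) as in the context. Then for every η ∈ ℂ the following three identities hold: θ₃(0)²·θ₂(0)·θ₂(2η) + θ₂(0)²·θ₃(0)·θ₃(2η) = 2·θ₂(η)²·θ₃(η)²; θ₄(0)²·θ₃(0)·θ₃(2η) + θ₃(0)²·θ₄(0)·θ₄(2η) = 2·θ₃(η)²·θ₄(η)²; and θ₂(0)²·θ₄(0)·θ₄(2η) + θ₄(0)²·θ₂(0)·θ₂(2η) = 2·θ₂(η)²·θ₄(η)². (Equivalently, with j_k = θ_{k+1}(0)θ_{k+1}(2η)/θ_{k+1}(η)² and ĵ_k = θ_{k+1}(0)²/θ_{k+1}(η)² for k = 1,2,3, one has j_k ĵ_ℓ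 + ĵ_k j_ℓ = 2 for all k ≠ ℓ.) -/
/-- `θ₃(z) = Σ_{n∈ℤ} q^{n²} e^{2πinz}` with `q = exp(πiτ)`. -/
noncomputable def theta3 (τ z : ℂ) : ℂ := jacobiTheta₂ z τ

/-- `θ₄(z) = θ₃(z + 1/2)`. -/
noncomputable def theta4 (τ z : ℂ) : ℂ := jacobiTheta₂ (z + 1 / 2) τ

/-- `θ₂(z) = q^{1/4} e^{πiz} θ₃(z + τ/2)`. -/
noncomputable def theta2 (τ z : ℂ) : ℂ :=
  Complex.exp ((Real.pi : ℂ) * Complex.I * τ / 4) *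
    Complex.exp ((Real.pi : ℂ) * Complex.I * z) * jacobiTheta₂ (z + τ / 2) τ

/-- `θ₁(z) = −i q^{1/4} e^{πiz} θ₃(z + 1/2 + τ/2)`. -/
noncomputable def theta1 (τ z : ℂ) : ℂ :=
  -Complex.I * Complex.exp ((Real.pi : ℂ) * Complex.I * τ / 4) *
    Complex.exp ((Real.pi : ℂ) * Complex.I * z) *
    jacobiTheta₂ (z + 1 / 2 + τ / 2) τ

/-!
The terms `exp (2πirz + πir²τ)` of the theta series satisfy a parallelogram law that turns a product
of two terms for `τ` into a product of two terms for `2τ`. Summing it over pairs of half-integers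
`r ± s` gives `θ₂(x|τ) θ₂(y|τ) = θ₂(x+y|2τ) θ₃(x-y|2τ) + θ₃(x+y|2τ) θ₂(x-y|2τ)`, and the cases
`(η, η)`, `(η, 0)` and `(0, 0)` combine to the first identity for the parameter `2τ`. The modular
substitutions `τ ↦ -1/τ` and `τ ↦ τ + 1` carry `θ₂, θ₃` to multiples of `θ₄, θ₃` and of `θ₂, θ₄`,
and so carry the first identity to the other two.
-/

open Complex

/-- The general term `q^{r²} e^{2πirz}` of a theta series. The frequency `r` is complex so that the
same function serves for `θ₃` (`r ∈ ℤ`) and for `θ₂` (`r ∈ ℤ + 1/2`). -/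
noncomputable def thetaTerm (τ z r : ℂ) : ℂ :=
  cexp (2 * Real.pi * I * r * z + Real.pi * I * r ^ 2 * τ)

lemma thetaTerm_add_mul_thetaTerm_sub (τ x y r s : ℂ) :
    thetaTerm τ x (r + s) * thetaTerm τ y (r - s) =
      thetaTerm (2 * τ) (x + y) r * thetaTerm (2 * τ) (x - y) s := by
  simp only [thetaTerm, ← Complex.exp_add]
  ring_nf

section Series

variable {τ : ℂ} (hτ : 0 < τ.im)

include hτ

lemma hasSum_theta3 (z : ℂ) : HasSum (fun n : ℤ ↦ thetaTerm τ z n) (theta3 τ z) :=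
  hasSum_jacobiTheta₂_term z hτ

lemma hasSum_theta2 (z : ℂ) : HasSum (fun n : ℤ ↦ thetaTerm τ z (n + 1 / 2)) (theta2 τ z) := by
  have hterm (n : ℤ) : thetaTerm τ z (n + 1 / 2) =
      cexp (Real.pi * I * τ / 4) * cexp (Real.pi * I * z) *
        jacobiTheta₂_term n (z + τ / 2) τ := by
    simp only [thetaTerm, jacobiTheta₂_term, ← Complex.exp_add]
    ring_nf
  simp only [hterm]
  exact (hasSum_jacobiTheta₂_term (z + τ / 2) hτ).mul_left _

end Series

lemma hasSum_mul_prod {ι κ R : Type*} [NormedRing R] [NormedSpace ℝ R] [FiniteDimensional ℝ R]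
    {f : ι → R} {g : κ → R} {a b : R} (hf : HasSum f a) (hg : HasSum g b) :
    HasSum (fun p : ι × κ ↦ f p.1 * g p.2) (a * b) :=
  have := FiniteDimensional.complete ℝ R
  hf.mul hg (summable_mul_of_summable_norm hf.summable.norm hg.summable.norm)

lemma bijective_sumElim_add_sub : Function.Bijective
    (Sum.elim (fun p ↦ (p.1 + p.2, p.1 - p.2)) (fun p ↦ (p.1 + p.2, p.1 - p.2 - 1)) :
      (ℤ × ℤ) ⊕ (ℤ × ℤ) → ℤ × ℤ) := by
  constructor
  · rintro (⟨a, b⟩ | ⟨a, b⟩) (⟨c, d⟩ | ⟨c, d⟩) h <;>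
      simp only [Sum.elim_inl, Sum.elim_inr, Prod.mk.injEq, Sum.inl.injEq, Sum.inr.injEq,
        reduceCtorEq] at h ⊢ <;>
      omega
  · rintro ⟨m, n⟩
    obtain h | h := Int.emod_two_eq_zero_or_one (m + n)
    · exact ⟨.inl ((m + n) / 2, (m - n) / 2), by grind⟩
    · exact ⟨.inr ((m + n + 1) / 2, (m - n) / 2), by grind⟩

lemma theta2_mul_theta2 {τ : ℂ} (hτ : 0 < τ.im) (x y : ℂ) :
    theta2 τ x * theta2 τ y =
      theta2 (2 * τ) (x + y) * theta3 (2 * τ) (x - y) +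
        theta3 (2 * τ) (x + y) * theta2 (2 * τ) (x - y) := by
  have h2τ : 0 < (2 * τ).im := by simpa using hτ
  have hprod := hasSum_mul_prod (hasSum_theta2 hτ x) (hasSum_theta2 hτ y)
  -- `m + 1/2` and `n + 1/2` are `r + s` and `r - s` with one of `r`, `s` in `ℤ` and the other in
  -- `ℤ + 1/2`; the parity of `m + n` decides which.
  rw [← (Equiv.ofBijective _ bijective_sumElim_add_sub).hasSum_iff] at hprod
  refine hprod.unique (HasSum.sum ?_ ?_)
  · convert
      hasSum_mul_prod (hasSum_theta2 h2τ (x + y)) (hasSum_theta3 h2τ (x - y)) using 2 with ⟨a, b⟩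
    simp only [Function.comp_apply, Equiv.ofBijective_apply, Sum.elim_inl,
      ← thetaTerm_add_mul_thetaTerm_sub]
    push_cast
    ring_nf
  · convert
      hasSum_mul_prod (hasSum_theta3 h2τ (x + y)) (hasSum_theta2 h2τ (x - y)) using 2 with ⟨a, b⟩
    simp only [Function.comp_apply, Equiv.ofBijective_apply, Sum.elim_inr,
      ← thetaTerm_add_mul_thetaTerm_sub]
    push_cast
    ring_nf

lemma theta3_functional_equation (τ z : ℂ) :
    theta3 τ z =
      1 / (-I * τ) ^ (1 / 2 : ℂ) * cexp (-Real.pi * I * z ^ 2 / τ) * theta3 (-1 / τ) (z / τ) :=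
  jacobiTheta₂_functional_equation z τ

lemma theta4_functional_equation (τ z : ℂ) :
    theta4 τ z =
      1 / (-I * τ) ^ (1 / 2 : ℂ) * cexp (-Real.pi * I * z ^ 2 / τ) * theta2 (-1 / τ) (z / τ) := by
  have hshift : z / τ + -1 / τ / 2 = (z + 1 / 2) / τ + -1 / τ := by ring
  have hexp : cexp (-Real.pi * I * (z + 1 / 2) ^ 2 / τ) =
      cexp (-Real.pi * I * z ^ 2 / τ) * (cexp (Real.pi * I * (-1 / τ) / 4) *
        cexp (Real.pi * I * (z / τ)) *
          cexp (-Real.pi * I * (-1 / τ + 2 * ((z + 1 / 2) / τ)))) := by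
    simp only [← Complex.exp_add]
    ring_nf
  rw [theta4, theta2, jacobiTheta₂_functional_equation, hshift, jacobiTheta₂_add_left', hexp]
  ring

lemma theta3_add_one (τ z : ℂ) : theta3 (τ + 1) z = theta4 τ z := by
  refine tsum_congr fun n ↦ Complex.exp_eq_exp_iff_exists_int.2 ?_
  obtain ⟨m, hm⟩ : Even (n * (n - 1)) := Int.even_mul_pred_self n
  have hm' : (n : ℂ) * (n - 1) = m + m := mod_cast hm
  exact ⟨m, by linear_combination Real.pi * I * hm'⟩

lemma theta2_add_one (τ z : ℂ) : theta2 (τ + 1) z = cexp (Real.pi * I / 4) * theta2 τ z := by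
  have htheta3 := theta3_add_one τ (z + (τ + 1) / 2)
  rw [theta3, theta4, show z + (τ + 1) / 2 + 1 / 2 = z + τ / 2 + 1 by ring,
    jacobiTheta₂_add_left] at htheta3
  rw [theta2, theta2, htheta3, mul_add, add_div, Complex.exp_add, mul_one]
  ring

section Duplication

variable (τ : ℂ) (hτ : 0 < τ.im) (η : ℂ)

include hτ

lemma theta2_theta3_duplication :
    theta3 τ 0 ^ 2 * theta2 τ 0 * theta2 τ (2 * η) + theta2 τ 0 ^ 2 * theta3 τ 0 * theta3 τ (2 * η)
      = 2 * theta2 τ η ^ 2 * theta3 τ η ^ 2 := by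
  obtain ⟨σ, rfl⟩ : ∃ σ, τ = 2 * σ := ⟨τ / 2, by ring⟩
  have hσ : 0 < σ.im := by simpa using hτ
  have hηη := theta2_mul_theta2 hσ η η
  have hη0 := theta2_mul_theta2 hσ η 0
  have h00 := theta2_mul_theta2 hσ 0 0
  simp only [← two_mul, sub_self, add_zero, sub_zero, mul_zero] at hηη hη0 h00
  set A := theta2 (2 * σ)
  set B := theta3 (2 * σ)
  calc B 0 ^ 2 * A 0 * A (2 * η) + A 0 ^ 2 * B 0 * B (2 * η)
      = A 0 * B 0 * (A (2 * η) * B 0 + B (2 * η) * A 0) := by ring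
    _ = theta2 σ 0 * theta2 σ 0 / 2 * (theta2 σ η * theta2 σ η) := by rw [hηη, h00]; ring
    _ = (theta2 σ η * theta2 σ 0) ^ 2 / 2 := by ring
    _ = 2 * A η ^ 2 * B η ^ 2 := by rw [hη0]; ring

lemma theta3_theta4_duplication :
    theta4 τ 0 ^ 2 * theta3 τ 0 * theta3 τ (2 * η) + theta3 τ 0 ^ 2 * theta4 τ 0 * theta4 τ (2 * η)
      = 2 * theta3 τ η ^ 2 * theta4 τ η ^ 2 := by
  have hS : 0 < (-1 / τ).im := by
    simpa [neg_div, inv_neg] using UpperHalfPlane.im_inv_neg_coe_pos ⟨τ, hτ⟩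
  have hdup := theta2_theta3_duplication (-1 / τ) hS (η / τ)
  have hweight : cexp (-Real.pi * I * (2 * η) ^ 2 / τ) =
      cexp (-Real.pi * I * η ^ 2 / τ) ^ 4 := by
    rw [← Complex.exp_nat_mul]
    ring_nf
  have hweight_zero : cexp (-Real.pi * I * 0 ^ 2 / τ) = 1 := by simp
  simp only [theta3_functional_equation τ, theta4_functional_equation τ, hweight, hweight_zero,
    zero_div, mul_div_assoc 2 η τ]
  linear_combination
    (1 / (-I * τ) ^ (1 / 2 : ℂ)) ^ 4 * cexp (-Real.pi * I * η ^ 2 / τ) ^ 4 * hdup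

lemma theta2_theta4_duplication :
    theta2 τ 0 ^ 2 * theta4 τ 0 * theta4 τ (2 * η) + theta4 τ 0 ^ 2 * theta2 τ 0 * theta2 τ (2 * η)
      = 2 * theta2 τ η ^ 2 * theta4 τ η ^ 2 := by
  have hdup := theta2_theta3_duplication (τ + 1) (by simpa using hτ) η
  simp only [theta3_add_one, theta2_add_one] at hdup
  refine mul_left_cancel₀ (pow_ne_zero 2 (Complex.exp_ne_zero (Real.pi * I / 4))) ?_
  linear_combination hdup

end Duplication

/-- The three duplication identities `j_k ĵ_ℓ + ĵ_k j_ℓ = 2` in cleared form. -/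
theorem stmt_17 (τ : ℂ) (hτ : 0 < τ.im) (η : ℂ) :
    (theta3 τ 0) ^ 2 * theta2 τ 0 * theta2 τ (2 * η)
        + (theta2 τ 0) ^ 2 * theta3 τ 0 * theta3 τ (2 * η)
      = 2 * (theta2 τ η) ^ 2 * (theta3 τ η) ^ 2 ∧
    (theta4 τ 0) ^ 2 * theta3 τ 0 * theta3 τ (2 * η)
        + (theta3 τ 0) ^ 2 * theta4 τ 0 * theta4 τ (2 * η)
      = 2 * (theta3 τ η) ^ 2 * (theta4 τ η) ^ 2 ∧
    (theta2 τ 0) ^ 2 * theta4 τ 0 * theta4 τ (2 * η)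
        + (theta4 τ 0) ^ 2 * theta2 τ 0 * theta2 τ (2 * η)
      = 2 * (theta2 τ η) ^ 2 * (theta4 τ η) ^ 2 :=
  ⟨theta2_theta3_duplication τ hτ η, theta3_theta4_duplication τ hτ η,
    theta2_theta4_duplication τ hτ η⟩
end
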